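/- arXiv:1704.04191 — 4 statements merged into one kernel-verified Lean document; each statement's English description precedes it below -/
import Mathlib

section
/- Let f : ℝⁿ → ℝᵐ be strictly differentiable at x̄ with derivative Df(x̄) and Jacobian matrix ∇f(x̄). Then, for every u ∈ ℝᵐ, the coderivative of f at x̄ for f(x̄) is the singleton D*f(x̄ | f(x̄))(u) = { ∇f(x̄)ᵀ u }. -/
open Filter Topology Set Metric RealInnerProductSpace
open scoped ENNReal NNReal Pointwise

noncomputable section

/-- Graph of a set-valued map. -/
def svGraph {α β : Type*} (F : α → Set β) : Set (α × β) := {p | p.2 ∈ F p.1}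

/-- Inverse of a set-valued map. -/
def svInv {α β : Type*} (F : α → Set β) : β → Set α := fun y => {x | y ∈ F x}

/-- Local closedness of a set at a point of a metric space. -/
def LocClosedAt {α : Type*} [PseudoMetricSpace α] (s : Set α) (p : α) : Prop :=
  ∃ r : ℝ, 0 < r ∧ IsClosed (s ∩ Metric.closedBall p r)

section Cones

variable {X : Type*} [NormedAddCommGroup X] [NormedSpace ℝ X]

/-- Bouligand-Severi contingent cone. -/
def contingentCone (Ω : Set X) (x : X) : Set X :=
  { u | ∃ (t : ℕ → ℝ) (uk : ℕ → X), (∀ k, 0 < t k) ∧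
      Tendsto t atTop (𝓝 0) ∧ Tendsto uk atTop (𝓝 u) ∧ ∀ k, x + t k • uk k ∈ Ω }

/-- Bouligand paratingent cone. -/
def paratingentCone (Ω : Set X) (x : X) : Set X :=
  { u | ∃ (t : ℕ → ℝ) (uk : ℕ → X) (xk : ℕ → X), (∀ k, 0 < t k) ∧
      Tendsto t atTop (𝓝 0) ∧ Tendsto uk atTop (𝓝 u) ∧
      (∀ k, xk k ∈ Ω) ∧ Tendsto xk atTop (𝓝 x) ∧ ∀ k, xk k + t k • uk k ∈ Ω }

end Cones

section NormalCones

variable {X : Type*} [NormedAddCommGroup X] [InnerProductSpace ℝ X]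

/-- Fréchet (regular) normal cone. -/
def frechetNormalCone (Ω : Set X) (x : X) : Set X :=
  { v | ∀ ε : ℝ, 0 < ε → ∃ δ : ℝ, 0 < δ ∧ ∀ y ∈ Ω, ‖y - x‖ < δ →
      ⟪v, y - x⟫ ≤ ε * ‖y - x‖ }

/-- Limiting (Mordukhovich) normal cone. -/
def limitingNormalCone (Ω : Set X) (x : X) : Set X :=
  { v | ∃ (xk : ℕ → X) (vk : ℕ → X), (∀ k, xk k ∈ Ω) ∧
      Tendsto xk atTop (𝓝 x) ∧ Tendsto vk atTop (𝓝 v) ∧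
      ∀ k, vk k ∈ frechetNormalCone Ω (xk k) }

end NormalCones

section Derivatives

variable {E F : Type*} [NormedAddCommGroup E] [NormedSpace ℝ E]
  [NormedAddCommGroup F] [NormedSpace ℝ F]

/-- Graphical derivative. -/
def gDeriv (Fm : E → Set F) (x : E) (y : F) : E → Set F := fun u =>
  {v | (u, v) ∈ contingentCone (svGraph Fm) (x, y)}

/-- Strict graphical derivative. -/
def sgDeriv (Fm : E → Set F) (x : E) (y : F) : E → Set F := fun u =>
  {v | (u, v) ∈ paratingentCone (svGraph Fm) (x, y)}

end Derivatives

section Coderivative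

variable {E F : Type*} [NormedAddCommGroup E] [InnerProductSpace ℝ E]
  [NormedAddCommGroup F] [InnerProductSpace ℝ F]

/-- Coderivative: `w ∈ D*F(x|y)(z)` iff `(w, -z)` is in the limiting normal cone
to the graph of `F` (viewed inside the `ℓ²` product) at `(x, y)`. -/
def coDeriv (Fm : E → Set F) (x : E) (y : F) : F → Set E := fun z =>
  { w | (WithLp.equiv 2 (E × F)).symm (w, -z) ∈
      limitingNormalCone ((WithLp.equiv 2 (E × F)).symm '' svGraph Fm)
        ((WithLp.equiv 2 (E × F)).symm (x, y)) }

end Coderivative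

section Norms

variable {E F : Type*} [NormedAddCommGroup E] [NormedAddCommGroup F]

/-- Outer norm of a (positively homogeneous) set-valued map. -/
def outerNormSV (H : E → Set F) : ℝ≥0∞ :=
  ⨆ (x : E) (_ : ‖x‖ ≤ 1) (y : F) (_ : y ∈ H x), (‖y‖₊ : ℝ≥0∞)

/-- Inner norm of a (positively homogeneous) set-valued map. -/
def innerNormSV (H : E → Set F) : ℝ≥0∞ :=
  ⨆ (x : E) (_ : ‖x‖ ≤ 1), ⨅ (y : F) (_ : y ∈ H x), (‖y‖₊ : ℝ≥0∞)

/-- Positive homogeneity of a set-valued map. -/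
def PosHomogeneous {E F : Type*} [NormedAddCommGroup E] [NormedSpace ℝ E]
    [NormedAddCommGroup F] [NormedSpace ℝ F] (H : E → Set F) : Prop :=
  (0 : F) ∈ H 0 ∧ ∀ (c : ℝ), 0 < c → ∀ x, H (c • x) = c • (H x)

end Norms

section Stability

variable {E F : Type*} [NormedAddCommGroup E] [NormedAddCommGroup F]

/-- Metric regularity with constant `κ`. -/
def MetrRegWith (κ : ℝ≥0) (Fm : E → Set F) (xbar : E) (ybar : F) : Prop :=
  ∃ U ∈ 𝓝 xbar, ∃ V ∈ 𝓝 ybar, ∀ x ∈ U, ∀ y ∈ V,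
    EMetric.infEdist x (svInv Fm y) ≤ (κ : ℝ≥0∞) * EMetric.infEdist y (Fm x)

/-- The regularity modulus `reg (F; xbar|ybar)`. -/
def regMod (Fm : E → Set F) (xbar : E) (ybar : F) : ℝ≥0∞ :=
  ⨅ (κ : ℝ≥0) (_ : MetrRegWith κ Fm xbar ybar), (κ : ℝ≥0∞)

/-- Aubin property with constant `κ`. -/
def AubinWith (κ : ℝ≥0) (S : F → Set E) (ybar : F) (xbar : E) : Prop :=
  ∃ V ∈ 𝓝 ybar, ∃ U ∈ 𝓝 xbar, ∀ y ∈ V, ∀ y' ∈ V, ∀ x ∈ S y' ∩ U,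
    ∃ x' ∈ S y, ‖x - x'‖ ≤ (κ : ℝ) * ‖y - y'‖

/-- The Lipschitz modulus `lip (S; ybar|xbar)`. -/
def lipMod (S : F → Set E) (ybar : F) (xbar : E) : ℝ≥0∞ :=
  ⨅ (κ : ℝ≥0) (_ : AubinWith κ S ybar xbar), (κ : ℝ≥0∞)

/-- Strong metric subregularity with constant `κ`. -/
def SubregWith (κ : ℝ≥0) (Fm : E → Set F) (xbar : E) (ybar : F) : Prop :=
  ∃ U ∈ 𝓝 xbar, ∀ x ∈ U, (‖x - xbar‖₊ : ℝ≥0∞) ≤ (κ : ℝ≥0∞) * EMetric.infEdist ybar (Fm x)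

/-- The subregularity modulus `subreg (F; xbar|ybar)`. -/
def subregMod (Fm : E → Set F) (xbar : E) (ybar : F) : ℝ≥0∞ :=
  ⨅ (κ : ℝ≥0) (_ : SubregWith κ Fm xbar ybar), (κ : ℝ≥0∞)

/-- Isolated calmness with constant `κ`. -/
def CalmWith (κ : ℝ≥0) (S : F → Set E) (ybar : F) (xbar : E) : Prop :=
  ∃ V ∈ 𝓝 ybar, ∃ U ∈ 𝓝 xbar, ∀ y ∈ V, ∀ x ∈ S y ∩ U, ‖x - xbar‖ ≤ (κ : ℝ) * ‖y - ybar‖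

/-- The calmness modulus `clm (S; ybar|xbar)`. -/
def clmMod (S : F → Set E) (ybar : F) (xbar : E) : ℝ≥0∞ :=
  ⨅ (κ : ℝ≥0) (_ : CalmWith κ S ybar xbar), (κ : ℝ≥0∞)

/-- Strong metric regularity: metric regularity plus a single-valued localization
of the inverse. -/
def StrongMetrReg (Fm : E → Set F) (xbar : E) (ybar : F) : Prop :=
  (∃ κ : ℝ≥0, MetrRegWith κ Fm xbar ybar) ∧
  ∃ U ∈ 𝓝 xbar, ∃ V ∈ 𝓝 ybar, ∀ y ∈ V, (svInv Fm y ∩ U).Subsingleton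

end Stability

/-!
Near a point where `f` is calm, `y ↦ (y, f y)` distorts distances only by bounded factors, so `v` is
Fréchet normal to the graph at `(x, f x)` iff `⟪v.fst, y - x⟫ + ⟪v.snd, f y - f x⟫` is bounded above
by `o(‖y - x‖)`. The left side equals `⟪v.fst + A† v.snd, y - x⟫` plus the pairing of `v.snd` with
the linearization error `f y - f x - A (y - x)`. At `x` itself the error is `o(‖y - x‖)`, so
`v.fst + A† v.snd = 0` makes `v` a normal. Strict differentiability bounds the error by
`c * ‖z - y‖` between any two points near `x`, for every `c > 0`; hence normals at all nearby graph
points lie in the closed set `‖v.fst + A† v.snd‖ ≤ c * ‖v.snd‖`, and so do their limits.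
-/

section Graph

open Asymptotics

variable {E F : Type*}

/-- The graph of a single-valued map `f`, as a subset of the `ℓ²` product in which the coderivative
is defined. It is encoded as a range, so that `x ↦ (x, f x)` parametrizes it. -/
def l2Graph (f : E → F) : Set (WithLp 2 (E × F)) := range fun x => WithLp.toLp 2 (x, f x)

theorem image_svGraph_singleton (f : E → F) :
    (WithLp.equiv 2 (E × F)).symm '' svGraph (fun x => {f x}) = l2Graph f := by
  ext p
  constructor
  · rintro ⟨⟨x, y⟩, hy, rfl⟩
    obtain rfl : y = f x := hy
    exact ⟨x, rfl⟩
  · rintro ⟨x, rfl⟩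
    exact ⟨(x, f x), rfl, rfl⟩

theorem nhdsWithin_l2Graph_eq_map [TopologicalSpace E] [TopologicalSpace F] {f : E → F} {x : E}
    (hf : ContinuousAt f x) :
    𝓝[l2Graph f] (WithLp.toLp 2 (x, f x)) = map (fun y => WithLp.toLp 2 (y, f y)) (𝓝 x) := by
  have hfst : Continuous (fun p : WithLp 2 (E × F) => p.fst) :=
    (WithLp.prod_continuous_ofLp 2 E F).fst
  have hgraph : ContinuousAt (fun y => WithLp.toLp 2 (y, f y)) x :=
    (WithLp.prod_continuous_toLp 2 E F).continuousAt.comp (continuousAt_id.prodMk hf)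
  exact (Function.LeftInverse.map_nhds_eq (fun _ => rfl) hfst.continuousWithinAt hgraph).symm

theorem isBigO_toLp_graph_sub [SeminormedAddCommGroup E] [SeminormedAddCommGroup F]
    {f : E → F} {x : E} (hf : (fun y => f y - f x) =O[𝓝 x] fun y => y - x) :
    (fun y => WithLp.toLp 2 (y, f y) - WithLp.toLp 2 (x, f x)) =O[𝓝 x] fun y => y - x := by
  have hlip := WithLp.prod_lipschitzWith_toLp 2 E F
  have hprod : (fun y => (y, f y) - (x, f x)) =O[𝓝 x] fun y => y - x :=
    (isBigO_refl _ _).prod_left hf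
  exact (IsBigO.of_bound _ (.of_forall fun y => hlip.norm_sub_le (y, f y) (x, f x))).trans hprod

end Graph

section Linearization

open Asymptotics

variable {𝕜 E F : Type*} [NontriviallyNormedField 𝕜] [NormedAddCommGroup E] [NormedSpace 𝕜 E]
  [NormedAddCommGroup F] [NormedSpace 𝕜 F] {f : E → F} {A : E →L[𝕜] F} {x : E}

theorem isBigO_sub_of_eventually_norm_sub_sub_le {c : ℝ}
    (h : ∀ᶠ y in 𝓝 x, ‖f y - f x - A (y - x)‖ ≤ c * ‖y - x‖) :
    (fun y => f y - f x) =O[𝓝 x] fun y => y - x := by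
  simpa only [sub_add_cancel] using (IsBigO.of_bound c h).add (A.isBigO_sub (𝓝 x) x)

theorem eventually_eventually_norm_sub_sub_le_of_hasStrictFDerivAt
    (hf : HasStrictFDerivAt f A x) {c : ℝ} (hc : 0 < c) :
    ∀ᶠ y in 𝓝 x, ∀ᶠ z in 𝓝 y, ‖f z - f y - A (z - y)‖ ≤ c * ‖z - y‖ := by
  have hdiag : Tendsto (fun y : E => (y, y)) (𝓝 x) (𝓝 (x, x)) :=
    (continuous_id.prodMk continuous_id).tendsto x
  filter_upwards [hdiag.eventually (hf.isLittleO.def hc).eventually_nhds] with y hy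
  exact (Continuous.prodMk_left y).tendsto y |>.eventually hy

end Linearization

section Adjoint

open scoped InnerProduct InnerProductSpace

variable {𝕜 E F : Type*} [RCLike 𝕜] [NormedAddCommGroup E] [InnerProductSpace 𝕜 E]
  [NormedAddCommGroup F] [InnerProductSpace 𝕜 F] [CompleteSpace E] [CompleteSpace F]

theorem inner_add_inner_eq_inner_add_adjoint (A : E →L[𝕜] F) (a h : E) (b k : F) :
    ⟪a, h⟫_𝕜 + ⟪b, k⟫_𝕜 = ⟪a + (A†) b, h⟫_𝕜 + ⟪b, k - A h⟫_𝕜 := by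
  rw [inner_add_left, ContinuousLinearMap.adjoint_inner_left, inner_sub_right]
  ring

end Adjoint

section NormalConeLemmas

variable {X : Type*} [NormedAddCommGroup X] [InnerProductSpace ℝ X] {Ω : Set X} {x v : X}

theorem mem_frechetNormalCone_iff_eventually :
    v ∈ frechetNormalCone Ω x ↔
      ∀ ε : ℝ, 0 < ε → ∀ᶠ y in 𝓝[Ω] x, ⟪v, y - x⟫ ≤ ε * ‖y - x‖ := by
  simp only [frechetNormalCone, mem_ofPred_eq, eventually_nhdsWithin_iff,
    Metric.eventually_nhds_iff, dist_eq_norm]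
  exact forall₂_congr fun _ _ => exists_congr fun _ => and_congr_right fun _ =>
    forall_congr' fun _ => forall_comm

theorem frechetNormalCone_subset_limitingNormalCone (hx : x ∈ Ω) :
    frechetNormalCone Ω x ⊆ limitingNormalCone Ω x := fun v hv =>
  ⟨fun _ => x, fun _ => v, fun _ => hx, tendsto_const_nhds, tendsto_const_nhds, fun _ => hv⟩

theorem limitingNormalCone_subset_of_isClosed {C : Set X} (hC : IsClosed C)
    (h : ∀ᶠ y in 𝓝[Ω] x, frechetNormalCone Ω y ⊆ C) : limitingNormalCone Ω x ⊆ C := by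
  rintro v ⟨xk, vk, hxk, hx, hv, hmem⟩
  have hxΩ : Tendsto xk atTop (𝓝[Ω] x) :=
    tendsto_nhdsWithin_iff.2 ⟨hx, Eventually.of_forall hxk⟩
  refine hC.mem_of_tendsto hv ?_
  filter_upwards [hxΩ.eventually h] with k hk using hk (hmem k)

theorem norm_le_of_eventually_inner_sub_le {K : ℝ} (hK : 0 ≤ K)
    (h : ∀ᶠ y in 𝓝 x, ⟪v, y - x⟫ ≤ K * ‖y - x‖) : ‖v‖ ≤ K := by
  rcases eq_or_ne v 0 with rfl | hv
  · rwa [norm_zero]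
  have hray : Tendsto (fun t : ℝ => x + t • v) (𝓝[>] 0) (𝓝 x) := by
    have : ContinuousAt (fun t : ℝ => x + t • v) 0 := by fun_prop
    simpa only [zero_smul, add_zero] using this.tendsto.mono_left nhdsWithin_le_nhds
  obtain ⟨t, hinner, ht⟩ := ((hray.eventually h).and self_mem_nhdsWithin).exists
  have ht : 0 < t := ht
  rw [add_sub_cancel_left, inner_smul_right, real_inner_self_eq_norm_sq, norm_smul,
    Real.norm_of_nonneg ht.le] at hinner
  refine le_of_mul_le_mul_left ?_ (mul_pos ht (norm_pos_iff.2 hv))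
  linarith

end NormalConeLemmas

section NormalsToGraph

open Asymptotics
open scoped InnerProduct

variable {E F : Type*} [NormedAddCommGroup E] [InnerProductSpace ℝ E]
  [NormedAddCommGroup F] [InnerProductSpace ℝ F] {f : E → F} {x : E} {v : WithLp 2 (E × F)}

theorem mem_coDeriv_singleton_iff {w : E} {u : F} :
    w ∈ coDeriv (fun x => {f x}) x (f x) u ↔
      WithLp.toLp 2 (w, -u) ∈ limitingNormalCone (l2Graph f) (WithLp.toLp 2 (x, f x)) := by
  rw [← image_svGraph_singleton]
  rfl

theorem mem_frechetNormalCone_l2Graph_iff (hf : (fun y => f y - f x) =O[𝓝 x] fun y => y - x) :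
    v ∈ frechetNormalCone (l2Graph f) (WithLp.toLp 2 (x, f x)) ↔
      ∀ ε : ℝ, 0 < ε →
        ∀ᶠ y in 𝓝 x, ⟪v.fst, y - x⟫ + ⟪v.snd, f y - f x⟫ ≤ ε * ‖y - x‖ := by
  have hcont : ContinuousAt f x := by
    refine tendsto_sub_nhds_zero_iff.1 (hf.trans_tendsto ?_)
    exact tendsto_sub_nhds_zero_iff.2 tendsto_id
  rw [mem_frechetNormalCone_iff_eventually, nhdsWithin_l2Graph_eq_map hcont]
  simp only [eventually_map, WithLp.prod_inner_apply, WithLp.ofLp_sub, Prod.fst_sub, Prod.snd_sub]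
  constructor
  · intro h ε hε
    obtain ⟨K, hK, hbound⟩ := (isBigO_toLp_graph_sub hf).exists_pos
    filter_upwards [h (ε / K) (by positivity), hbound.bound] with y hy hyK
    calc _ ≤ ε / K * ‖WithLp.toLp 2 (y, f y) - WithLp.toLp 2 (x, f x)‖ := hy
      _ ≤ ε / K * (K * ‖y - x‖) := by gcongr
      _ = ε * ‖y - x‖ := by field_simp
  · intro h ε hε
    filter_upwards [h ε hε] with y hy
    exact hy.trans (mul_le_mul_of_nonneg_left
      (WithLp.norm_fst_le _ (WithLp.toLp 2 (y, f y) - WithLp.toLp 2 (x, f x))) hε.le)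

variable [CompleteSpace E] [CompleteSpace F] {A : E →L[ℝ] F}

theorem norm_fst_add_adjoint_snd_le_of_mem_frechetNormalCone {c : ℝ} (hc : 0 ≤ c)
    (h : ∀ᶠ y in 𝓝 x, ‖f y - f x - A (y - x)‖ ≤ c * ‖y - x‖)
    (hv : v ∈ frechetNormalCone (l2Graph f) (WithLp.toLp 2 (x, f x))) :
    ‖v.fst + (A†) v.snd‖ ≤ c * ‖v.snd‖ := by
  refine le_of_forall_pos_le_add fun ε hε =>
    norm_le_of_eventually_inner_sub_le (x := x) (by positivity) ?_
  have hnormal := (mem_frechetNormalCone_l2Graph_iff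
    (isBigO_sub_of_eventually_norm_sub_sub_le h)).1 hv ε hε
  filter_upwards [hnormal, h] with y hy hfy
  rw [inner_add_inner_eq_inner_add_adjoint A] at hy
  have hremainder : -(‖v.snd‖ * (c * ‖y - x‖)) ≤ ⟪v.snd, f y - f x - A (y - x)⟫ :=
    neg_le_of_abs_le ((abs_real_inner_le_norm _ _).trans (by gcongr))
  linarith

theorem mem_frechetNormalCone_l2Graph_of_hasFDerivAt (hf : HasFDerivAt f A x)
    (hv : v.fst + (A†) v.snd = 0) :
    v ∈ frechetNormalCone (l2Graph f) (WithLp.toLp 2 (x, f x)) := by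
  refine (mem_frechetNormalCone_l2Graph_iff hf.isBigO_sub).2 fun ε hε => ?_
  have hremainder : (fun y => ⟪v.snd, f y - f x - A (y - x)⟫) =o[𝓝 x] fun y => y - x :=
    ((innerSL ℝ v.snd).isBigO_comp _ _).trans_isLittleO hf.isLittleO
  filter_upwards [hremainder.def hε] with y hy
  rw [inner_add_inner_eq_inner_add_adjoint A, hv, inner_zero_left, zero_add]
  exact (le_abs_self _).trans hy

theorem limitingNormalCone_l2Graph_of_hasStrictFDerivAt (hf : HasStrictFDerivAt f A x) :
    limitingNormalCone (l2Graph f) (WithLp.toLp 2 (x, f x)) = {v | v.fst + (A†) v.snd = 0} := by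
  refine Subset.antisymm (fun v hv => ?_) fun v hv =>
    frechetNormalCone_subset_limitingNormalCone (mem_range_self x)
      (mem_frechetNormalCone_l2Graph_of_hasFDerivAt hf.hasFDerivAt hv)
  have hbound (c : ℝ) (hc : 0 < c) : ‖v.fst + (A†) v.snd‖ ≤ c * ‖v.snd‖ := by
    have hclosed : IsClosed {v : WithLp 2 (E × F) | ‖v.fst + (A†) v.snd‖ ≤ c * ‖v.snd‖} := by
      have hofLp := WithLp.prod_continuous_ofLp 2 E F
      exact isClosed_le (hofLp.fst.add ((A†).continuous.comp hofLp.snd)).norm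
        (hofLp.snd.norm.const_mul c)
    refine limitingNormalCone_subset_of_isClosed hclosed ?_ hv
    rw [nhdsWithin_l2Graph_eq_map hf.continuousAt, eventually_map]
    filter_upwards [eventually_eventually_norm_sub_sub_le_of_hasStrictFDerivAt hf hc] with y hy
    exact fun _ => norm_fst_add_adjoint_snd_le_of_mem_frechetNormalCone hc.le hy
  have hlim : Tendsto (fun c : ℝ => c * ‖v.snd‖) (𝓝[>] 0) (𝓝 0) := by
    have : ContinuousAt (fun c : ℝ => c * ‖v.snd‖) 0 := by fun_prop
    simpa only [zero_mul] using this.tendsto.mono_left nhdsWithin_le_nhds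
  exact norm_le_zero_iff.1 (ge_of_tendsto hlim (eventually_mem_nhdsWithin.mono hbound))

theorem coDeriv_of_strictly_differentiable_general (hf : HasStrictFDerivAt f A x) (u : F) :
    coDeriv (fun x => {f x}) x (f x) u = {(A†) u} := by
  ext w
  rw [mem_coDeriv_singleton_iff, limitingNormalCone_l2Graph_of_hasStrictFDerivAt hf,
    mem_ofPred_eq, mem_singleton_iff, WithLp.toLp_fst, WithLp.toLp_snd, map_neg,
    ← sub_eq_add_neg, sub_eq_zero]

end NormalsToGraph

/-- Coderivative of a strictly differentiable map: `D*f(xbar|f xbar)(u) = {∇f(xbar)ᵀ u}`. -/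
theorem coDeriv_of_strictly_differentiable {n m : ℕ}
    (f : EuclideanSpace ℝ (Fin n) → EuclideanSpace ℝ (Fin m))
    (xbar : EuclideanSpace ℝ (Fin n))
    (A : EuclideanSpace ℝ (Fin n) →L[ℝ] EuclideanSpace ℝ (Fin m))
    (hf : HasStrictFDerivAt f A xbar) (u : EuclideanSpace ℝ (Fin m)) :
    coDeriv (fun x => {f x}) xbar (f xbar) u = {ContinuousLinearMap.adjoint A u} :=
  coDeriv_of_strictly_differentiable_general hf u

end
end

section
/- Let f : ℝⁿ → ℝᵐ be strictly differentiable at x, let F : ℝⁿ ⇉ ℝᵐ be a set-valued map, and let y ∈ F(x). Then for every u ∈ ℝⁿ, D̃(f + F)(x | f(x) + y)(u) = Df(x)u + D̃F(x|y)(u), where f + F denotes the set-valued map z ↦ { f(z) + w : w ∈ F(z) }. -/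
open Filter Topology Set Metric RealInnerProductSpace
open scoped ENNReal NNReal Pointwise

noncomputable section

/-!
The differential of a strictly differentiable map carries the paratingent cone of a set into that of
its image. The graph of `f + F` is the image of the graph of `F` under the shear
`(x, y) ↦ (x, f x + y)`, whose differential at `(x, y)` is `(u, v) ↦ (u, Df(x) u + v)`; this gives
one inclusion. The inverse shear is the one associated with `-f`, which gives the other.
-/

section SumRule

variable {𝕜 E F : Type*} [NontriviallyNormedField 𝕜] [NormedAddCommGroup E]
  [NormedAddCommGroup F]

theorem tendsto_smul_sub_of_hasStrictFDerivAt [NormedSpace 𝕜 E] [NormedSpace 𝕜 F]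
    {f : E → F} {f' : E →L[𝕜] F} {x v : E} (hf : HasStrictFDerivAt f f' x)
    {ι : Type*} {l : Filter ι} {c : ι → 𝕜} {a d : ι → E} (ha : Tendsto a l (𝓝 x))
    (hd : Tendsto d l (𝓝 0)) (hcd : Tendsto (fun i => c i • d i) l (𝓝 v)) :
    Tendsto (fun i => c i • (f (a i + d i) - f (a i))) l (𝓝 (f' v)) := by
  have h_pair : Tendsto (fun i => (a i + d i, a i)) l (𝓝 (x, x)) := by
    simpa only [add_zero] using (ha.add hd).prodMk_nhds ha
  have h_remainder :
      Tendsto (fun i => c i • (f (a i + d i) - f (a i)) - f' (c i • d i)) l (𝓝 0) := by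
    rw [← Asymptotics.isLittleO_one_iff 𝕜]
    calc (fun i => c i • (f (a i + d i) - f (a i)) - f' (c i • d i))
        =o[l] fun i => c i • d i := by
          simpa [Function.comp_def, smul_sub] using
            (Asymptotics.isBigO_refl c l).smul_isLittleO (hf.isLittleO.comp_tendsto h_pair)
      _ =O[l] fun _ => (1 : 𝕜) := hcd.isBigO_one 𝕜
  simpa only [Function.comp_apply, sub_add_cancel, zero_add] using
    h_remainder.add ((f'.continuous.tendsto v).comp hcd)

variable [NormedSpace ℝ E] [NormedSpace ℝ F]

theorem mapsTo_paratingentCone_of_hasStrictFDerivAt {g : E → F} {g' : E →L[ℝ] F} {p : E}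
    (hg : HasStrictFDerivAt g g' p) {Ω : Set E} {Ω' : Set F} (hΩ : MapsTo g Ω Ω') :
    MapsTo g' (paratingentCone Ω p) (paratingentCone Ω' (g p)) := by
  rintro v ⟨t, w, q, ht_pos, ht, hw, hqΩ, hq, hqwΩ⟩
  have ht_ne (k : ℕ) : t k ≠ 0 := (ht_pos k).ne'
  have h_step : Tendsto (fun k => t k • w k) atTop (𝓝 0) := by
    simpa only [zero_smul] using ht.smul hw
  have h_quotient :
      Tendsto (fun k => (t k)⁻¹ • (g (q k + t k • w k) - g (q k))) atTop (𝓝 (g' v)) :=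
    tendsto_smul_sub_of_hasStrictFDerivAt hg hq h_step <| by
      simpa only [inv_smul_smul₀ (ht_ne _)] using hw
  refine ⟨t, _, g ∘ q, ht_pos, ht, h_quotient, fun k => hΩ (hqΩ k),
    hg.continuousAt.tendsto.comp hq, fun k => ?_⟩
  simpa only [Function.comp_apply, smul_inv_smul₀ (ht_ne k), add_sub_cancel] using hΩ (hqwΩ k)

theorem mapsTo_sgDeriv_of_hasStrictFDerivAt {f : E → F} {A : E →L[ℝ] F} {x : E}
    (hf : HasStrictFDerivAt f A x) {G H : E → Set F}
    (hGH : ∀ z, MapsTo (f z + ·) (G z) (H z)) (y : F) (u : E) :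
    MapsTo (A u + ·) (sgDeriv G x y u) (sgDeriv H x (f x + y) u) := by
  have h_shear : HasStrictFDerivAt (fun p : E × F => (p.1, f p.1 + p.2))
      ((ContinuousLinearMap.fst ℝ E F).prod
        (A ∘L ContinuousLinearMap.fst ℝ E F + ContinuousLinearMap.snd ℝ E F)) (x, y) :=
    hasStrictFDerivAt_fst.prodMk
      ((hf.comp (x, y) hasStrictFDerivAt_fst).add hasStrictFDerivAt_snd)
  have h_graph : MapsTo (fun p : E × F => (p.1, f p.1 + p.2)) (svGraph G) (svGraph H) :=
    fun p hp => hGH p.1 hp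
  exact fun v hv => mapsTo_paratingentCone_of_hasStrictFDerivAt h_shear h_graph hv

theorem sgDeriv_sum_rule_general {f : E → F} {A : E →L[ℝ] F} {x : E}
    (hf : HasStrictFDerivAt f A x) (G : E → Set F) (y : F) (u : E) :
    sgDeriv (fun z => (f z + ·) '' G z) x (f x + y) u = (A u + ·) '' sgDeriv G x y u := by
  refine Subset.antisymm (fun v hv => ?_)
    (mapsTo_sgDeriv_of_hasStrictFDerivAt hf (fun z => mapsTo_image _ _) y u).image_subset
  have h_cancel (z : E) : MapsTo ((-f) z + ·) ((f z + ·) '' G z) (G z) := by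
    rintro _ ⟨w, hw, rfl⟩
    simpa only [Pi.neg_apply, neg_add_cancel_left] using hw
  have h_neg : -A u + v ∈ sgDeriv G x y u := by
    simpa only [Pi.neg_apply, neg_apply, neg_add_cancel_left] using
      mapsTo_sgDeriv_of_hasStrictFDerivAt hf.neg h_cancel (f x + y) u hv
  exact ⟨-A u + v, h_neg, add_neg_cancel_left _ _⟩

end SumRule

/-- Sum rule for strict graphical derivatives:
`D̃(f+F)(x | f x + y)(u) = Df(x)u + D̃F(x|y)(u)`. -/
theorem sgDeriv_sum_rule {n m : ℕ}
    (f : EuclideanSpace ℝ (Fin n) → EuclideanSpace ℝ (Fin m))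
    (Fm : EuclideanSpace ℝ (Fin n) → Set (EuclideanSpace ℝ (Fin m)))
    (x : EuclideanSpace ℝ (Fin n))
    (A : EuclideanSpace ℝ (Fin n) →L[ℝ] EuclideanSpace ℝ (Fin m))
    (hf : HasStrictFDerivAt f A x) (y : EuclideanSpace ℝ (Fin m)) (hy : y ∈ Fm x)
    (u : EuclideanSpace ℝ (Fin n)) :
    sgDeriv (fun z => (f z + ·) '' Fm z) x (f x + y) u = (A u + ·) '' sgDeriv Fm x y u :=
  sgDeriv_sum_rule_general hf Fm y u

end
end

section
/- Let H : ℝⁿ ⇉ ℝᵐ be positively homogeneous. Then: (a) |H|⁻ = inf{ κ > 0 : H(x) ∩ κ𝔹 ≠ ∅ for every x ∈ 𝔹 }, where 𝔹 denotes the closed unit ball; (b) |H|⁺ = inf{ κ > 0 : y ∈ H(x) implies ‖y‖ ≤ κ‖x‖ } = sup over ‖y‖ = 1 of 1/d(0, H⁻¹(y)); (c) if the graph of H is closed, then |H|⁺ < ∞ if and only if H(0) = {0}; (d) if the graph of H is closed and convex, then |H|⁻ < ∞ if and only if dom H = ℝⁿ. -/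
open Filter Topology Set Metric RealInnerProductSpace
open scoped ENNReal NNReal Pointwise

noncomputable section

/-!
By positive homogeneity, a bound on the values of `H` over the unit ball is the same as a linear
bound `‖y‖ ≤ κ * ‖x‖` on the graph, and such a bound may be tested at the pairs with `‖y‖ = 1`.
Hence `|H|⁺` is the reciprocal of the distance from `0` to the set `H⁻¹(𝕊)` of points having a
value on the unit sphere. When the graph is closed and the sphere is compact, `H⁻¹(𝕊)` is closed,
so this distance vanishes exactly when `0 ∈ H⁻¹(𝕊)`, that is, when `H 0 ≠ {0}`.

For the inner norm, convexity of the graph makes `x ↦ d(0, H x)` a convex function. If `dom H` is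
the whole finite-dimensional space, this function is finite, hence continuous, hence bounded on
the unit ball.
-/

theorem eq_iInf_coe_of_forall_lt {a : ℝ≥0∞} {P : ℝ≥0 → Prop} (hle : ∀ κ, P κ → a ≤ κ)
    (hlt : ∀ κ : ℝ≥0, a < κ → P κ) : a = ⨅ (κ : ℝ≥0) (_ : 0 < κ ∧ P κ), (κ : ℝ≥0∞) := by
  refine le_antisymm (le_iInf₂ fun κ hκ => hle κ hκ.2) (le_of_forall_gt fun b hb => ?_)
  obtain ⟨κ, haκ, hκb⟩ := ENNReal.lt_iff_exists_nnreal_btwn.1 hb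
  have hκ : 0 < κ := ENNReal.coe_pos.1 (bot_le.trans_lt haκ)
  exact (iInf₂_le κ ⟨hκ, hlt κ haκ⟩).trans_lt hκb

theorem isClosed_biUnion_svInv {α β : Type*} [TopologicalSpace α] [TopologicalSpace β]
    {F : α → Set β} (hF : IsClosed (svGraph F)) {K : Set β} (hK : IsCompact K) :
    IsClosed (⋃ y ∈ K, svInv F y) := by
  have : CompactSpace K := isCompact_iff_compactSpace.1 hK
  have hpre : IsClosed ((fun p : α × K => (p.1, (p.2 : β))) ⁻¹' svGraph F) :=
    hF.preimage (by fun_prop)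
  convert isClosedMap_fst_of_compactSpace _ hpre
  ext x
  simp [svInv, svGraph]

section NormedValues

variable {α V F : Type*} [AddCommGroup V] [Module ℝ V] [NormedAddCommGroup F]

/-- The image `H⁻¹(𝕊)` of the unit sphere under the inverse map. For positively homogeneous `H` its
distance from the origin is the reciprocal of the outer norm. -/
def svInvUnitSphere (H : α → Set F) : Set α := ⋃ y ∈ sphere (0 : F) 1, svInv H y

theorem mem_svInvUnitSphere {H : α → Set F} {x : α} :
    x ∈ svInvUnitSphere H ↔ ∃ y ∈ H x, ‖y‖ = 1 := by
  simp [svInvUnitSphere, svInv, and_comm]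

theorem convexOn_infDist_of_convex_svGraph [NormedSpace ℝ F] {H : V → Set F} {s : Set V}
    (hconv : Convex ℝ (svGraph H)) (hs : Convex ℝ s) (hdom : ∀ x ∈ s, (H x).Nonempty) (z : F) :
    ConvexOn ℝ s fun x => infDist z (H x) := by
  refine ⟨hs, fun x hx x' hx' a b ha hb hab => le_of_forall_pos_le_add fun ε hε => ?_⟩
  obtain ⟨y, hy, hyε⟩ :=
    (infDist_lt_iff (hdom x hx)).1 (lt_add_of_pos_right (infDist z (H x)) hε)
  obtain ⟨y', hy', hyε'⟩ :=
    (infDist_lt_iff (hdom x' hx')).1 (lt_add_of_pos_right (infDist z (H x')) hε)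
  have hmem : a • y + b • y' ∈ H (a • x + b • x') :=
    hconv (x := (x, y)) hy (y := (x', y')) hy' ha hb hab
  calc infDist z (H (a • x + b • x'))
      ≤ dist z (a • y + b • y') := infDist_le_dist_of_mem hmem
    _ ≤ a * dist z y + b * dist z y' := by
      simpa only [dist_comm z, smul_eq_mul] using
        (convexOn_univ_dist z).2 trivial trivial ha hb hab
    _ ≤ a * (infDist z (H x) + ε) + b * (infDist z (H x') + ε) := by gcongr
    _ = a • infDist z (H x) + b • infDist z (H x') + ε := by
      simp only [smul_eq_mul]
      linear_combination ε * hab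

end NormedValues

section Normed

variable {E F : Type*} [NormedAddCommGroup E] [NormedAddCommGroup F] {H : E → Set F}

theorem innerNormSV_eq_iSup_infEDist (H : E → Set F) :
    innerNormSV H = ⨆ (x : E) (_ : ‖x‖ ≤ 1), infEDist 0 (H x) := by
  simp only [innerNormSV, infEDist, edist_zero_left]

theorem innerNormSV_le_of_forall_exists_norm_le {κ : ℝ≥0}
    (h : ∀ x : E, ‖x‖ ≤ 1 → ∃ y ∈ H x, ‖y‖ ≤ κ) : innerNormSV H ≤ κ := by
  refine iSup₂_le fun x hx => ?_
  obtain ⟨y, hy, hyκ⟩ := h x hx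
  exact iInf₂_le_of_le y hy (by exact_mod_cast hyκ)

theorem exists_norm_lt_of_innerNormSV_lt {κ : ℝ≥0} (h : innerNormSV H < κ) {x : E}
    (hx : ‖x‖ ≤ 1) : ∃ y ∈ H x, ‖y‖ < κ := by
  rw [innerNormSV_eq_iSup_infEDist] at h
  obtain ⟨y, hy, hyκ⟩ := infEDist_lt_iff.1 ((le_iSup₂ x hx).trans_lt h)
  rw [edist_zero_left] at hyκ
  exact ⟨y, hy, by exact_mod_cast hyκ⟩

theorem innerNormSV_eq_iInf (H : E → Set F) :
    innerNormSV H = ⨅ (κ : ℝ≥0) (_ : 0 < κ ∧ ∀ x : E, ‖x‖ ≤ 1 → ∃ y ∈ H x, ‖y‖ ≤ κ),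
      (κ : ℝ≥0∞) :=
  eq_iInf_coe_of_forall_lt (fun _ => innerNormSV_le_of_forall_exists_norm_le)
    fun _ hκ _ hx => (exists_norm_lt_of_innerNormSV_lt hκ hx).imp fun _ => And.imp_right le_of_lt

theorem outerNormSV_le_coe_iff {κ : ℝ≥0} :
    outerNormSV H ≤ κ ↔ ∀ x, ‖x‖ ≤ 1 → ∀ y ∈ H x, ‖y‖ ≤ κ := by
  simp only [outerNormSV, iSup_le_iff, ENNReal.coe_le_coe, ← NNReal.coe_le_coe, coe_nnnorm]

theorem inv_infEDist_svInvUnitSphere (H : E → Set F) :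
    (infEDist 0 (svInvUnitSphere H))⁻¹ = ⨆ (y : F) (_ : ‖y‖ = 1), (infEDist 0 (svInv H y))⁻¹ := by
  simp only [svInvUnitSphere, infEDist_iUnion, ENNReal.inv_iInf, mem_sphere_zero_iff_norm]

theorem inv_infEDist_zero_le_coe_iff {s : Set E} {κ : ℝ≥0} :
    (infEDist 0 s)⁻¹ ≤ κ ↔ ∀ x ∈ s, 1 ≤ κ * ‖x‖ := by
  rw [ENNReal.inv_le_iff_inv_le, le_infEDist]
  refine forall₂_congr fun x _ => ?_
  rw [edist_zero_left, ENNReal.inv_le_iff_le_mul (by simp) (by simp)]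
  norm_cast

end Normed

section NormedSpace

variable {E F : Type*} [NormedAddCommGroup E] [NormedSpace ℝ E]
  [NormedAddCommGroup F] [NormedSpace ℝ F] {H : E → Set F}

theorem PosHomogeneous.smul_mem_smul (hH : PosHomogeneous H) {c : ℝ} (hc : 0 < c) {x : E} {y : F}
    (hy : y ∈ H x) : c • y ∈ H (c • x) := by
  rw [hH.2 c hc]
  exact Set.smul_mem_smul_set hy

theorem PosHomogeneous.inv_norm_smul_mem_svInvUnitSphere (hH : PosHomogeneous H) {x : E} {y : F}
    (hy : y ∈ H x) (hy0 : y ≠ 0) : ‖y‖⁻¹ • x ∈ svInvUnitSphere H :=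
  mem_svInvUnitSphere.2
    ⟨_, hH.smul_mem_smul (inv_pos.2 (norm_pos_iff.2 hy0)) hy, norm_smul_inv_norm (𝕜 := ℝ) hy0⟩

theorem PosHomogeneous.outerNormSV_le_coe_iff_norm_le_mul (hH : PosHomogeneous H) {κ : ℝ≥0} :
    outerNormSV H ≤ κ ↔ ∀ x, ∀ y ∈ H x, ‖y‖ ≤ κ * ‖x‖ := by
  rw [outerNormSV_le_coe_iff]
  refine ⟨fun hball x y hy => ?_, fun hlin x hx y hy =>
    (hlin x y hy).trans (mul_le_of_le_one_right κ.2 hx)⟩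
  -- Scaling by `t⁻¹` with `t > ‖x‖` instead of by `‖x‖⁻¹` covers the case `x = 0`.
  have hscale : ∀ t > ‖x‖, ‖y‖ ≤ κ * t := fun t ht => by
    have ht0 : 0 < t := (norm_nonneg x).trans_lt ht
    have hle : ‖t⁻¹ • y‖ ≤ κ := hball _
      (by simpa [norm_smul, abs_of_pos ht0] using inv_mul_le_one_of_le₀ ht.le ht0.le)
      _ (hH.smul_mem_smul (inv_pos.2 ht0) hy)
    rwa [norm_smul, norm_inv, Real.norm_of_nonneg ht0.le, inv_mul_le_iff₀ ht0, mul_comm] at hle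
  have hlim : Tendsto (fun t : ℝ => κ * t) (𝓝[>] ‖x‖) (𝓝 (κ * ‖x‖)) :=
    ((continuous_const_mul (κ : ℝ)).tendsto _).mono_left nhdsWithin_le_nhds
  exact ge_of_tendsto hlim (eventually_mem_nhdsWithin.mono hscale)

theorem PosHomogeneous.outerNormSV_eq_iInf (hH : PosHomogeneous H) :
    outerNormSV H = ⨅ (κ : ℝ≥0) (_ : 0 < κ ∧ ∀ x, ∀ y ∈ H x, ‖y‖ ≤ κ * ‖x‖), (κ : ℝ≥0∞) :=
  eq_iInf_coe_of_forall_lt (fun _ => hH.outerNormSV_le_coe_iff_norm_le_mul.2)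
    fun _ hκ => hH.outerNormSV_le_coe_iff_norm_le_mul.1 hκ.le

theorem PosHomogeneous.forall_norm_le_mul_iff (hH : PosHomogeneous H) {κ : ℝ} (hκ : 0 ≤ κ) :
    (∀ x, ∀ y ∈ H x, ‖y‖ ≤ κ * ‖x‖) ↔ ∀ x ∈ svInvUnitSphere H, 1 ≤ κ * ‖x‖ := by
  constructor
  · intro hlin x hx
    obtain ⟨y, hy, hy1⟩ := mem_svInvUnitSphere.1 hx
    exact hy1 ▸ hlin x y hy
  · intro hunit x y hy
    rcases eq_or_ne y 0 with rfl | hy0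
    · simpa using mul_nonneg hκ (norm_nonneg x)
    have hle := hunit _ (hH.inv_norm_smul_mem_svInvUnitSphere hy hy0)
    rwa [norm_smul, norm_inv, norm_norm, mul_left_comm, le_inv_mul_iff₀ (norm_pos_iff.2 hy0),
      mul_one] at hle

theorem PosHomogeneous.outerNormSV_eq_inv_infEDist (hH : PosHomogeneous H) :
    outerNormSV H = (infEDist 0 (svInvUnitSphere H))⁻¹ :=
  ENNReal.eq_of_forall_le_nnreal_iff fun κ => by
    rw [hH.outerNormSV_le_coe_iff_norm_le_mul, hH.forall_norm_le_mul_iff κ.coe_nonneg,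
      inv_infEDist_zero_le_coe_iff]

theorem PosHomogeneous.zero_notMem_svInvUnitSphere_iff (hH : PosHomogeneous H) :
    0 ∉ svInvUnitSphere H ↔ H 0 = {0} := by
  constructor
  · refine fun h => Subset.antisymm (fun y hy => ?_) (singleton_subset_iff.2 hH.1)
    by_contra hy0
    exact h (by simpa using hH.inv_norm_smul_mem_svInvUnitSphere hy hy0)
  · intro h
    simp [mem_svInvUnitSphere, h]

theorem PosHomogeneous.outerNormSV_lt_top_iff [ProperSpace F] (hH : PosHomogeneous H)
    (hclosed : IsClosed (svGraph H)) : outerNormSV H < ⊤ ↔ H 0 = {0} := by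
  have hS : IsClosed (svInvUnitSphere H) := isClosed_biUnion_svInv hclosed (isCompact_sphere 0 1)
  rw [hH.outerNormSV_eq_inv_infEDist, ENNReal.inv_lt_top, pos_iff_ne_zero, ne_eq,
    ← mem_closure_iff_infEDist_zero, hS.closure_eq, hH.zero_notMem_svInvUnitSphere_iff]

theorem PosHomogeneous.nonempty_of_innerNormSV_lt_top (hH : PosHomogeneous H)
    (hlt : innerNormSV H < ⊤) (x : E) : (H x).Nonempty := by
  obtain ⟨κ, hκ, -⟩ := ENNReal.lt_iff_exists_nnreal_btwn.1 hlt
  have ht : 0 < ‖x‖ + 1 := by positivity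
  have hball : ‖(‖x‖ + 1)⁻¹ • x‖ ≤ 1 := by
    rw [norm_smul, norm_inv, Real.norm_of_nonneg ht.le]
    exact inv_mul_le_one_of_le₀ (le_add_of_nonneg_right zero_le_one) ht.le
  obtain ⟨y, hy, -⟩ := exists_norm_lt_of_innerNormSV_lt hκ hball
  exact ⟨_, smul_inv_smul₀ ht.ne' x ▸ hH.smul_mem_smul ht hy⟩

theorem innerNormSV_lt_top_of_convex_svGraph [FiniteDimensional ℝ E]
    (hconv : Convex ℝ (svGraph H)) (hdom : ∀ x, (H x).Nonempty) : innerNormSV H < ⊤ := by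
  have : ProperSpace E := FiniteDimensional.proper ℝ E
  have hconvexOn : ConvexOn ℝ univ fun x => infDist 0 (H x) :=
    convexOn_infDist_of_convex_svGraph hconv convex_univ (fun x _ => hdom x) 0
  have hcont : Continuous fun x => infDist 0 (H x) := hconvexOn.locallyLipschitz.continuous
  obtain ⟨C, hC⟩ := (isCompact_closedBall (0 : E) 1).bddAbove_image hcont.continuousOn
  rw [innerNormSV_eq_iSup_infEDist]
  refine (iSup₂_le fun x hx => ?_).trans_lt (ENNReal.ofReal_lt_top (r := C))
  rw [← ENNReal.ofReal_toReal (infEDist_ne_top (hdom x))]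
  exact ENNReal.ofReal_le_ofReal (hC (mem_image_of_mem _ (mem_closedBall_zero_iff.2 hx)))

theorem norm_characterizations_general [FiniteDimensional ℝ E] [ProperSpace F]
    (hH : PosHomogeneous H) :
    (innerNormSV H = ⨅ (κ : ℝ≥0) (_ : 0 < κ ∧ ∀ x : E, ‖x‖ ≤ 1 → ∃ y ∈ H x, ‖y‖ ≤ κ),
      (κ : ℝ≥0∞)) ∧
    (outerNormSV H = ⨅ (κ : ℝ≥0) (_ : 0 < κ ∧ ∀ x, ∀ y ∈ H x, ‖y‖ ≤ κ * ‖x‖), (κ : ℝ≥0∞)) ∧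
    (outerNormSV H = ⨆ (y : F) (_ : ‖y‖ = 1), (infEDist 0 (svInv H y))⁻¹) ∧
    (IsClosed (svGraph H) → (outerNormSV H < ⊤ ↔ H 0 = {0})) ∧
    (Convex ℝ (svGraph H) → (innerNormSV H < ⊤ ↔ ∀ x, (H x).Nonempty)) :=
  ⟨innerNormSV_eq_iInf H, hH.outerNormSV_eq_iInf,
    hH.outerNormSV_eq_inv_infEDist.trans (inv_infEDist_svInvUnitSphere H),
    hH.outerNormSV_lt_top_iff, fun hconv =>
      ⟨hH.nonempty_of_innerNormSV_lt_top, innerNormSV_lt_top_of_convex_svGraph hconv⟩⟩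

end NormedSpace

/-- Norm characterizations for positively homogeneous set-valued maps. -/
theorem norm_characterizations {n m : ℕ}
    (H : EuclideanSpace ℝ (Fin n) → Set (EuclideanSpace ℝ (Fin m)))
    (hH : PosHomogeneous H) :
    (innerNormSV H = ⨅ (κ : ℝ≥0)
      (_ : 0 < κ ∧ ∀ x : EuclideanSpace ℝ (Fin n), ‖x‖ ≤ 1 → ∃ y ∈ H x, ‖y‖ ≤ (κ : ℝ)),
        (κ : ℝ≥0∞)) ∧
    (outerNormSV H = ⨅ (κ : ℝ≥0)
      (_ : 0 < κ ∧ ∀ (x : EuclideanSpace ℝ (Fin n)) (y : EuclideanSpace ℝ (Fin m)),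
            y ∈ H x → ‖y‖ ≤ (κ : ℝ) * ‖x‖), (κ : ℝ≥0∞)) ∧
    (outerNormSV H = ⨆ (y : EuclideanSpace ℝ (Fin m)) (_ : ‖y‖ = 1),
        (EMetric.infEdist (0 : EuclideanSpace ℝ (Fin n)) (svInv H y))⁻¹) ∧
    (IsClosed (svGraph H) → (outerNormSV H < ⊤ ↔ H 0 = {0})) ∧
    (IsClosed (svGraph H) → Convex ℝ (svGraph H) →
      (innerNormSV H < ⊤ ↔ ∀ x, (H x).Nonempty)) := by
  obtain ⟨hinner, houter, hsup, htop, hdom⟩ := norm_characterizations_general hH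
  exact ⟨hinner, houter, hsup, htop, fun _ => hdom⟩

end
end

section
/- Let F : ℝⁿ ⇉ ℝᵐ be a set-valued map and (x̄, ȳ) ∈ gph F a point at which gph F is locally closed. If c ∈ (0, ∞) satisfies limsup, over (x,y) → (x̄,ȳ) with (x,y) ∈ gph F, of |DF(x|y)⁻¹|⁻ < c, then there exist neighborhoods U of x̄ and V of ȳ such that d(x, F⁻¹(y)) ≤ c · d(y, F(x)) for all x ∈ U and y ∈ V. -/
open Filter Topology Set Metric RealInnerProductSpace
open scoped ENNReal NNReal Pointwise

noncomputable section

/-!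
Fix `(x₀, y₀)` in the graph near `(xbar, ybar)` and `y` near `ybar`. Apply Ekeland's variational
principle on the graph to the function `(x, y') ↦ ‖y - y'‖`, with the norm
`max (c⁻¹ * ‖x‖) (‖y'‖ / 2)` on the product. At the resulting point `(p, q)`, if `q ≠ y` then
the inner norm bound provides a tangent direction `(u, v)` to the graph whose second component `v`
is the unit vector pointing from `q` to `y` and with `‖u‖ < c`. To first order, moving along it
decreases `‖y - q‖` at rate one while the penalty grows at a rate smaller than one, which
contradicts the choice of `(p, q)`. Hence `y ∈ F p`, and `‖p - x₀‖ ≤ c * ‖y - y₀‖`: the inverse map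
has the Aubin property, which is equivalent to metric regularity.
-/

section Ekeland

variable {α : Type*}

/-- The points that precede `x` in Ekeland's order: those for which the decrease of `f` from `x`
is at least the distance to `x`. -/
def ekelandIic [PseudoMetricSpace α] (f : α → ℝ) (x : α) : Set α :=
  {y | f y + dist x y ≤ f x}

variable {f : α → ℝ} {x y z : α}

theorem mem_ekelandIic_self [PseudoMetricSpace α] : x ∈ ekelandIic f x := by
  simp [ekelandIic]

theorem ekelandIic_subset [PseudoMetricSpace α] (hy : y ∈ ekelandIic f x) :
    ekelandIic f y ⊆ ekelandIic f x := fun z (hz : f z + dist y z ≤ f y) =>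
  calc f z + dist x z ≤ f z + dist y z + dist x y := by linarith [dist_triangle x y z]
    _ ≤ f y + dist x y := by gcongr
    _ ≤ f x := hy

theorem isClosed_ekelandIic [PseudoMetricSpace α] (hf : LowerSemicontinuous f) (x : α) :
    IsClosed (ekelandIic f x) :=
  (hf.add (continuous_const.dist continuous_id).lowerSemicontinuous).isClosed_preimage (f x)

theorem exists_mem_ekelandIic_forall_dist_lt [PseudoMetricSpace α] (hf : BddBelow (range f))
    (x : α) {ε : ℝ} (hε : 0 < ε) :
    ∃ y ∈ ekelandIic f x, ∀ z ∈ ekelandIic f y, dist y z < ε := by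
  have hbdd : BddBelow (f '' ekelandIic f x) := hf.mono (image_subset_range _ _)
  obtain ⟨_, ⟨y, hy, rfl⟩, hlt⟩ :=
    Real.lt_sInf_add_pos (Set.Nonempty.image f ⟨x, mem_ekelandIic_self⟩) hε
  refine ⟨y, hy, fun z hz => ?_⟩
  have hinf : sInf (f '' ekelandIic f x) ≤ f z :=
    csInf_le hbdd (mem_image_of_mem f (ekelandIic_subset hy hz))
  have hle : f z + dist y z ≤ f y := hz
  linarith

theorem ekeland_variational_principle [MetricSpace α] [CompleteSpace α]
    (hf : LowerSemicontinuous f) (hbdd : BddBelow (range f)) (x₀ : α) :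
    ∃ x, f x + dist x₀ x ≤ f x₀ ∧ ∀ y, f y + dist x y ≤ f x → y = x := by
  choose! next hnext hdist using fun x n =>
    exists_mem_ekelandIic_forall_dist_lt hbdd x (Nat.one_div_pos_of_nat (α := ℝ) (n := n))
  let seq : ℕ → α := fun n => n.rec x₀ fun n x => next x n
  have hanti : Antitone fun n => ekelandIic f (seq n) :=
    antitone_nat_of_succ_le fun n => ekelandIic_subset (hnext (seq n) n)
  have hsmall (n : ℕ) (z : α) (hz : z ∈ ekelandIic f (seq (n + 1))) :
      dist (seq (n + 1)) z < 1 / ((n : ℝ) + 1) := hdist (seq n) n z hz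
  have hmem {n k : ℕ} (hnk : n ≤ k) : seq k ∈ ekelandIic f (seq n) :=
    hanti hnk mem_ekelandIic_self
  have hcauchy : CauchySeq seq := Metric.cauchySeq_iff'.2 fun ε hε => by
    obtain ⟨n, hn⟩ := exists_nat_one_div_lt hε
    exact ⟨n + 1, fun k hk => by
      rw [dist_comm]
      exact (hsmall n _ (hmem hk)).trans hn⟩
  obtain ⟨x, hx⟩ := cauchySeq_tendsto_of_complete hcauchy
  have hlim (n : ℕ) : x ∈ ekelandIic f (seq n) :=
    (isClosed_ekelandIic hf _).mem_of_tendsto hx ((eventually_ge_atTop n).mono fun _ => hmem)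
  refine ⟨x, hlim 0, fun y hy => tendsto_nhds_unique ?_ ((tendsto_add_atTop_iff_nat 1).2 hx)⟩
  exact tendsto_iff_dist_tendsto_zero.2 <| squeeze_zero (fun _ => dist_nonneg)
    (fun n => (hsmall n y (ekelandIic_subset (hlim (n + 1)) hy)).le)
    tendsto_one_div_add_atTop_nhds_zero_nat

theorem ekeland_variational_principle_of_isClosed {X Y : Type*} [NormedAddCommGroup X]
    [NormedSpace ℝ X] [NormedAddCommGroup Y] [NormedSpace ℝ Y] [CompleteSpace Y] {Ω : Set X}
    (hΩ : IsClosed Ω) {f : X → ℝ} (hf : LowerSemicontinuous f) (hbdd : BddBelow (range f))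
    (T : X ≃L[ℝ] Y) {z₀ : X} (hz₀ : z₀ ∈ Ω) :
    ∃ z ∈ Ω, f z + ‖T (z - z₀)‖ ≤ f z₀ ∧ ∀ w ∈ Ω, f w + ‖T (w - z)‖ ≤ f z → w = z := by
  have : CompleteSpace (T.symm ⁻¹' Ω) :=
    (hΩ.preimage T.symm.continuous).isComplete.completeSpace_coe
  obtain ⟨z, hz, hmin⟩ := ekeland_variational_principle
    (f := fun w : T.symm ⁻¹' Ω => f (T.symm w))
    (hf.comp (T.symm.continuous.comp continuous_subtype_val))
    (hbdd.mono (range_comp_subset_range _ f)) ⟨T z₀, by simpa using hz₀⟩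
  refine ⟨T.symm z, z.2, ?_, fun w hw hle => ?_⟩
  · simpa [Subtype.dist_eq, dist_eq_norm'] using hz
  · have := hmin ⟨T w, by simpa using hw⟩ (by simpa [Subtype.dist_eq, dist_eq_norm'] using hle)
    simp [← this]

end Ekeland

section Tangent

open NormedSpace (normalize norm_smul_normalize norm_normalize)

variable {X Y Z : Type*} [NormedAddCommGroup X] [NormedSpace ℝ X]
  [NormedAddCommGroup Y] [NormedSpace ℝ Y] [NormedAddCommGroup Z] [NormedSpace ℝ Z]

theorem tendsto_add_smul_of_tendsto_zero {ι : Type*} {l : Filter ι} {t : ι → ℝ} {w : ι → X}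
    {u : X} (z : X) (ht : Tendsto t l (𝓝 0)) (hw : Tendsto w l (𝓝 u)) :
    Tendsto (fun k => z + t k • w k) l (𝓝 z) := by
  simpa using tendsto_const_nhds.add (ht.smul hw)

theorem contingentCone_subset_inter_of_mem_nhds {Ω O : Set X} {z : X} (hO : O ∈ 𝓝 z) :
    contingentCone Ω z ⊆ contingentCone (Ω ∩ O) z := by
  rintro u ⟨t, w, ht_pos, ht, hw, hmem⟩
  obtain ⟨N, hN⟩ := eventually_atTop.1
    ((tendsto_add_smul_of_tendsto_zero z ht hw).eventually_mem hO)
  exact ⟨fun k => t (k + N), fun k => w (k + N), fun k => ht_pos _,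
    ht.comp (tendsto_add_atTop_nat N), hw.comp (tendsto_add_atTop_nat N),
    fun k => ⟨hmem _, hN _ (Nat.le_add_left N k)⟩⟩

theorem norm_sub_smul_le {y : Y} (hy : y ≠ 0) {t : ℝ} (ht₀ : 0 ≤ t) (ht : t ≤ ‖y‖) (w : Y) :
    ‖y - t • w‖ ≤ ‖y‖ - t * (1 - ‖normalize y - w‖) := by
  have hdecomp : y - t • w = (‖y‖ - t) • normalize y + t • (normalize y - w) := by
    rw [sub_smul, norm_smul_normalize, smul_sub]
    abel
  calc ‖y - t • w‖
      ≤ ‖(‖y‖ - t) • normalize y‖ + ‖t • (normalize y - w)‖ := hdecomp ▸ norm_add_le _ _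
    _ = ‖y‖ - t * (1 - ‖normalize y - w‖) := by
      rw [norm_smul, norm_normalize hy, norm_smul,
        Real.norm_of_nonneg (sub_nonneg.2 ht), Real.norm_of_nonneg ht₀]
      ring

theorem exists_norm_sub_map_add_norm_lt_of_mem_contingentCone {Ω : Set X} {z u : X}
    (hu : u ∈ contingentCone Ω z) (A : X →L[ℝ] Y) (T : X →L[ℝ] Z) {y : Y} (hy : A z ≠ y)
    (hAu : A u = normalize (y - A z)) (hTu : ‖T u‖ < 1) :
    ∃ w ∈ Ω, ‖y - A w‖ + ‖T (w - z)‖ < ‖y - A z‖ := by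
  obtain ⟨t, w, ht_pos, ht, hw, hmem⟩ := hu
  have hyz : y - A z ≠ 0 := sub_ne_zero.2 hy.symm
  have hrate : Tendsto (fun k => ‖A u - A (w k)‖ + ‖T (w k)‖) atTop
      (𝓝 (‖A u - A u‖ + ‖T u‖)) :=
    (tendsto_const_nhds.sub ((A.continuous.tendsto u).comp hw)).norm.add
      ((T.continuous.tendsto u).comp hw).norm
  obtain ⟨k, hk_rate, hk_small⟩ := ((hrate.eventually_lt_const (by simpa using hTu)).and
    (ht.eventually_le_const (norm_pos_iff.2 hyz))).exists
  refine ⟨_, hmem k, ?_⟩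
  calc ‖y - A (z + t k • w k)‖ + ‖T (z + t k • w k - z)‖
      = ‖(y - A z) - t k • A (w k)‖ + t k * ‖T (w k)‖ := by
        rw [add_sub_cancel_left, map_add, map_smul, map_smul, norm_smul,
          Real.norm_of_nonneg (ht_pos k).le, sub_sub]
    _ ≤ ‖y - A z‖ - t k * (1 - ‖A u - A (w k)‖) + t k * ‖T (w k)‖ := by
        rw [hAu]
        gcongr
        exact norm_sub_smul_le hyz (ht_pos k).le hk_small _
    _ = ‖y - A z‖ - t k * (1 - (‖A u - A (w k)‖ + ‖T (w k)‖)) := by ring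
    _ < ‖y - A z‖ := sub_lt_self _ (mul_pos (ht_pos k) (sub_pos.2 hk_rate))

theorem exists_map_eq_of_forall_exists_mem_contingentCone [CompleteSpace Z] {Ω : Set X}
    (hΩ : IsClosed Ω) (A : X →L[ℝ] Y) (T : X ≃L[ℝ] Z) {z₀ : X} (hz₀ : z₀ ∈ Ω) {y : Y}
    (htan : ∀ z ∈ Ω, ‖T (z - z₀)‖ ≤ ‖y - A z₀‖ → A z ≠ y →
      ∃ u ∈ contingentCone Ω z, A u = normalize (y - A z) ∧ ‖T u‖ < 1) :
    ∃ z ∈ Ω, A z = y ∧ ‖T (z - z₀)‖ ≤ ‖y - A z₀‖ := by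
  obtain ⟨z, hz, hle, hmin⟩ := ekeland_variational_principle_of_isClosed hΩ
    (f := fun z => ‖y - A z‖) (by fun_prop : Continuous fun z => ‖y - A z‖).lowerSemicontinuous
    ⟨0, forall_mem_range.2 fun _ => norm_nonneg _⟩ T hz₀
  have hTz : ‖T (z - z₀)‖ ≤ ‖y - A z₀‖ := (le_add_of_nonneg_left (norm_nonneg _)).trans hle
  refine ⟨z, hz, ?_, hTz⟩
  by_contra hne
  obtain ⟨u, hu, hAu, hTu⟩ := htan z hz hTz hne
  obtain ⟨w, hw, hlt⟩ :=
    exists_norm_sub_map_add_norm_lt_of_mem_contingentCone hu A (T : X →L[ℝ] Z) hne hAu hTu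
  obtain rfl := hmin w hw hlt.le
  simp at hlt

end Tangent

section MetricRegularity

open NormedSpace (normalize norm_normalize)

variable {E F : Type*} [NormedAddCommGroup E] [NormedAddCommGroup F]

theorem exists_mem_nnnorm_lt_of_innerNormSV_lt {H : E → Set F} {c : ℝ≥0} (hH : innerNormSV H < c)
    {x : E} (hx : ‖x‖ ≤ 1) : ∃ y ∈ H x, ‖y‖₊ < c := by
  have hinf : ⨅ (y : F) (_ : y ∈ H x), (‖y‖₊ : ℝ≥0∞) < c :=
    (le_iSup₂_of_le (f := fun x (_ : ‖x‖ ≤ 1) => ⨅ (y : F) (_ : y ∈ H x), (‖y‖₊ : ℝ≥0∞))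
      x hx le_rfl).trans_lt hH
  simpa only [iInf_lt_iff, exists_prop, ENNReal.coe_lt_coe] using hinf

theorem exists_continuousLinearEquiv_norm_eq_max (E F : Type*) [NormedAddCommGroup E]
    [NormedSpace ℝ E] [NormedAddCommGroup F] [NormedSpace ℝ F] {a b : ℝ} (ha : 0 < a)
    (hb : 0 < b) : ∃ T : (E × F) ≃L[ℝ] (E × F), ∀ z, ‖T z‖ = max (a * ‖z.1‖) (b * ‖z.2‖) :=
  ⟨(ContinuousLinearEquiv.smulLeft (Units.mk0 a ha.ne')).prodCongr
    (ContinuousLinearEquiv.smulLeft (Units.mk0 b hb.ne')),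
    fun z => by simp [Prod.norm_def, Units.smul_def, norm_smul, abs_of_pos ha, abs_of_pos hb]⟩

theorem exists_mem_svInv_norm_sub_le [NormedSpace ℝ E] [CompleteSpace E] [NormedSpace ℝ F]
    [CompleteSpace F] {Fm : E → Set F} {K : Set (E × F)} {c : ℝ≥0} (hc : 0 < c)
    (hclosed : IsClosed (svGraph Fm ∩ K))
    (hnorm : ∀ z ∈ svGraph Fm ∩ K, innerNormSV (svInv (gDeriv Fm z.1 z.2)) < c)
    {x : E} {y y' : F} (hy' : y' ∈ Fm x)
    (hK : closedBall x (c * ‖y - y'‖) ×ˢ closedBall y' (2 * ‖y - y'‖) ⊆ interior K) :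
    ∃ x' ∈ svInv Fm y, ‖x - x'‖ ≤ c * ‖y - y'‖ := by
  have hc' : (0 : ℝ) < c := hc
  obtain ⟨T, hT⟩ := exists_continuousLinearEquiv_norm_eq_max E F (inv_pos.2 hc')
    (b := 2⁻¹) (by positivity)
  have hbox {z : E × F} (hz : ‖T (z - (x, y'))‖ ≤ ‖y - y'‖) :
      z ∈ closedBall x (c * ‖y - y'‖) ×ˢ closedBall y' (2 * ‖y - y'‖) := by
    rw [hT, max_le_iff, inv_mul_le_iff₀ hc', inv_mul_le_iff₀ two_pos] at hz
    simpa only [mem_prod, mem_closedBall, dist_eq_norm, Prod.fst_sub, Prod.snd_sub] using hz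
  have htan (z : E × F) (hz : z ∈ svGraph Fm ∩ K) (hTz : ‖T (z - (x, y'))‖ ≤ ‖y - y'‖)
      (hzy : z.2 ≠ y) : ∃ u ∈ contingentCone (svGraph Fm ∩ K) z,
        u.2 = normalize (y - z.2) ∧ ‖T u‖ < 1 := by
    have hv : ‖normalize (y - z.2)‖ = 1 := norm_normalize (sub_ne_zero.2 hzy.symm)
    obtain ⟨u, hu, huc⟩ := exists_mem_nnnorm_lt_of_innerNormSV_lt (hnorm z hz) hv.le
    refine ⟨(u, normalize (y - z.2)), contingentCone_subset_inter_of_mem_nhds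
      (mem_interior_iff_mem_nhds.1 (hK (hbox hTz))) hu, rfl, ?_⟩
    rw [hT, hv]
    exact max_lt ((inv_mul_lt_one₀ hc').2 huc) (by norm_num)
  have hz₀ : (x, y') ∈ svGraph Fm ∩ K := ⟨hy', interior_subset (hK (hbox (by simp)))⟩
  obtain ⟨z, hz, rfl, hTz⟩ := exists_map_eq_of_forall_exists_mem_contingentCone hclosed
    (ContinuousLinearMap.snd ℝ E F) T hz₀ htan
  exact ⟨z.1, hz.1, mem_closedBall_iff_norm'.1 (hbox hTz).1⟩

theorem aubinWith_svInv_of_forall_innerNormSV_lt [NormedSpace ℝ E] [CompleteSpace E]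
    [NormedSpace ℝ F] [CompleteSpace F] {Fm : E → Set F} {xbar : E} {ybar : F} {c : ℝ≥0} {r : ℝ}
    (hc : 0 < c) (hr : 0 < r) (hclosed : IsClosed (svGraph Fm ∩ closedBall (xbar, ybar) r))
    (hnorm : ∀ z ∈ svGraph Fm ∩ closedBall (xbar, ybar) r,
      innerNormSV (svInv (gDeriv Fm z.1 z.2)) < c) :
    AubinWith c (svInv Fm) ybar xbar := by
  have hc' : (0 : ℝ) < c := hc
  obtain ⟨s, hs, hsr⟩ : ∃ s : ℝ, 0 < s ∧ s * (5 + 2 * c) = r :=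
    ⟨r / (5 + 2 * c), by positivity, div_mul_cancel₀ r (by positivity)⟩
  have hsc : 0 < s * c := mul_pos hs hc'
  refine ⟨ball ybar s, ball_mem_nhds _ hs, ball xbar s, ball_mem_nhds _ hs,
    fun y hy y' hy' x ⟨hxy', hx⟩ => exists_mem_svInv_norm_sub_le hc hclosed hnorm hxy' ?_⟩
  rw [mem_ball] at hy hy' hx
  have hyy' : ‖y - y'‖ < 2 * s := by
    rw [← dist_eq_norm]
    linarith [dist_triangle_right y y' ybar]
  have hcyy' : c * ‖y - y'‖ < c * (2 * s) := mul_lt_mul_of_pos_left hyy' hc'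
  refine Subset.trans ?_ ball_subset_interior_closedBall
  rw [← ball_prod_same]
  exact prod_mono (closedBall_subset_ball' (by linarith)) (closedBall_subset_ball' (by linarith))

theorem infEDist_le_mul_edist_of_norm_sub_le {s : Set E} {κ : ℝ≥0} {x x' : E} {y y' : F}
    (hx' : x' ∈ s) (h : ‖x - x'‖ ≤ κ * ‖y - y'‖) : infEDist x s ≤ κ * edist y y' := by
  refine (infEDist_le_edist_of_mem hx').trans ?_
  rw [edist_nndist, edist_nndist, ← ENNReal.coe_mul, ENNReal.coe_le_coe, nndist_eq_nnnorm,
    nndist_eq_nnnorm]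
  exact h

theorem AubinWith.metrRegWith {Fm : E → Set F} {xbar : E} {ybar : F} {κ : ℝ≥0}
    (hκ : 0 < κ) (hgr : ybar ∈ Fm xbar) (h : AubinWith κ (svInv Fm) ybar xbar) :
    MetrRegWith κ Fm xbar ybar := by
  obtain ⟨V, hV, U, hU, hAubin⟩ := h
  obtain ⟨r, hr, hrV⟩ := Metric.mem_nhds_iff.1 hV
  refine ⟨U ∩ ball xbar (κ * r / 2), inter_mem hU (ball_mem_nhds _ (by positivity)),
    ball ybar (r / 4), ball_mem_nhds _ (by positivity), fun x ⟨hxU, hx⟩ y hy => ?_⟩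
  have hyV : y ∈ V := hrV (ball_subset_ball (by linarith) hy)
  rw [mem_ball, dist_eq_norm] at hx hy
  suffices hpoint : ∀ y' ∈ Fm x, infEDist x (svInv Fm y) ≤ κ * edist y y' by
    have hκ₀ : (κ : ℝ≥0∞) ≠ 0 := by simpa using hκ.ne'
    calc infEDist x (svInv Fm y) ≤ ⨅ y' ∈ Fm x, κ * edist y y' := le_iInf₂ hpoint
      _ = κ * infEDist y (Fm x) := by
        simp only [infEDist, ENNReal.mul_iInf_of_ne hκ₀ ENNReal.coe_ne_top]
  intro y' hy'
  by_cases hy'V : y' ∈ V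
  · obtain ⟨x', hx', hdist⟩ := hAubin y hyV y' hy'V x ⟨hy', hxU⟩
    exact infEDist_le_mul_edist_of_norm_sub_le hx' hdist
  -- The Aubin property says nothing about `y'` here, but `‖y - y'‖` is bounded below,
  -- so that the estimate at `xbar` is enough.
  · obtain ⟨x', hx', hdist⟩ := hAubin y hyV ybar (mem_of_mem_nhds hV) xbar
      ⟨hgr, mem_of_mem_nhds hU⟩
    have hfar : r ≤ ‖y' - ybar‖ := by
      simpa [dist_eq_norm] using fun hy' => hy'V (hrV hy')
    have hyy' : 3 / 4 * r ≤ ‖y - y'‖ := by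
      linarith [norm_sub_le_norm_sub_add_norm_sub y' y ybar, norm_sub_rev y y']
    refine infEDist_le_mul_edist_of_norm_sub_le hx' ?_
    calc ‖x - x'‖ ≤ ‖x - xbar‖ + ‖xbar - x'‖ := norm_sub_le_norm_sub_add_norm_sub x xbar x'
      _ ≤ κ * r / 2 + κ * (r / 4) := by
        gcongr
        exact hdist.trans (by gcongr)
      _ = κ * (3 / 4 * r) := by ring
      _ ≤ κ * ‖y - y'‖ := by gcongr

theorem LocClosedAt.eventually_isClosed_inter_closedBall {α : Type*} [PseudoMetricSpace α]
    {s : Set α} {p : α} (h : LocClosedAt s p) :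
    ∀ᶠ r in 𝓝[>] (0 : ℝ), IsClosed (s ∩ closedBall p r) := by
  obtain ⟨R, hR, hclosed⟩ := h
  filter_upwards [Ioc_mem_nhdsGT hR] with r hr
  rw [← inter_eq_self_of_subset_right (closedBall_subset_closedBall (x := p) hr.2),
    ← inter_assoc]
  exact hclosed.inter isClosed_closedBall

theorem estimate_of_limsup_innerNorm_lt_general [NormedSpace ℝ E] [CompleteSpace E]
    [NormedSpace ℝ F] [CompleteSpace F] {Fm : E → Set F} {xbar : E} {ybar : F} {c : ℝ≥0}
    (hgr : ybar ∈ Fm xbar) (hloc : LocClosedAt (svGraph Fm) (xbar, ybar))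
    (hls : limsup (fun q : E × F => innerNormSV (svInv (gDeriv Fm q.1 q.2)))
      (𝓝[svGraph Fm] (xbar, ybar)) < c) :
    MetrRegWith c Fm xbar ybar := by
  have hc : 0 < c := ENNReal.coe_pos.1 (bot_le.trans_lt hls)
  obtain ⟨ε, hε, hnorm⟩ := Metric.mem_nhdsWithin_iff.1 (eventually_lt_of_limsup_lt hls)
  obtain ⟨r, hclosed, hr, hrε⟩ :=
    (hloc.eventually_isClosed_inter_closedBall.and (Ioo_mem_nhdsGT hε)).exists
  refine (aubinWith_svInv_of_forall_innerNormSV_lt hc hr hclosed ?_).metrRegWith hc hgr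
  exact fun z hz => hnorm ⟨closedBall_subset_ball hrε hz.2, hz.1⟩

end MetricRegularity

/-- If the limsup of the inner norms of the inverses of the graphical derivatives near
`(xbar, ybar)` is `< c`, then a metric-regularity-type estimate with constant `c` holds
on neighborhoods of `xbar` and `ybar`. -/
theorem estimate_of_limsup_innerNorm_lt {n m : ℕ}
    (Fm : EuclideanSpace ℝ (Fin n) → Set (EuclideanSpace ℝ (Fin m)))
    (xbar : EuclideanSpace ℝ (Fin n)) (ybar : EuclideanSpace ℝ (Fin m))
    (hgr : ybar ∈ Fm xbar) (hloc : LocClosedAt (svGraph Fm) (xbar, ybar))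
    (c : ℝ) (hc : 0 < c)
    (hls : Filter.limsup
        (fun q : EuclideanSpace ℝ (Fin n) × EuclideanSpace ℝ (Fin m) =>
          innerNormSV (svInv (gDeriv Fm q.1 q.2)))
        (𝓝[svGraph Fm] (xbar, ybar)) < ENNReal.ofReal c) :
    ∃ U ∈ 𝓝 xbar, ∃ V ∈ 𝓝 ybar, ∀ x ∈ U, ∀ y ∈ V,
      EMetric.infEdist x (svInv Fm y) ≤ ENNReal.ofReal c * EMetric.infEdist y (Fm x) :=
  estimate_of_limsup_innerNorm_lt_general hgr hloc hls

end
end
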